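/- arXiv:1606.04970 — 4 statements merged into one kernel-verified Lean document; each statement's English description precedes it below -/
import Mathlib

section
/- Let Y ∈ ℳ, μ ∈ ℝ^m, and S = C − 𝒜*(μ). Assume 𝒞 is compact, and let R = sup{Tr(X) : X ∈ 𝒞} < ∞. If ε_g, ε_H ≥ 0 are such that ‖2 S Y‖ ≤ ε_g and S + (ε_H/2) I_n is positive semidefinite, then the optimality gap satisfies 0 ≤ 2(Tr(C Y Yᵀ) − f*) ≤ ε_H R + ε_g √R. -/
/-!
With `S = C - 𝒜*(μ)`, the numbers `Tr (C X)` and `Tr (S X)` differ by the constant `⟨μ, b⟩` on the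
feasible set, so the gap between `Y Yᵀ` and a feasible `X` is `Tr (S Y Yᵀ) - Tr (S X)`. The first
term is `⟨Y, S Y⟩`, which Cauchy–Schwarz bounds by `‖S Y‖ ‖Y‖`; the second trace is at least
`-(ε_H / 2) Tr X` because the trace of a product of two positive semidefinite matrices is
nonnegative.
-/

open Matrix MeasureTheory

noncomputable section

/-- Frobenius inner product `⟨A, B⟩ = Tr(Aᵀ B)`. -/
def frobInner {n p : ℕ} (A B : Matrix (Fin n) (Fin p) ℝ) : ℝ := (Aᵀ * B).trace

/-- Frobenius norm. -/
def frobNorm {n p : ℕ} (A : Matrix (Fin n) (Fin p) ℝ) : ℝ := Real.sqrt (frobInner A A)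

/-- The constraint map 𝒜, `𝒜(X) i = Tr(A i * X)`. -/
def Aop {n m : ℕ} (A : Fin m → Matrix (Fin n) (Fin n) ℝ) (X : Matrix (Fin n) (Fin n) ℝ) :
    Fin m → ℝ := fun i => (A i * X).trace

/-- The adjoint 𝒜*, `𝒜*(μ) = ∑ i, μ i • A i`. -/
def Aadj {n m : ℕ} (A : Fin m → Matrix (Fin n) (Fin n) ℝ) (μ : Fin m → ℝ) :
    Matrix (Fin n) (Fin n) ℝ := ∑ i, μ i • A i

/-- The SDP feasible set 𝒞. -/
def sdpFeas {n m : ℕ} (A : Fin m → Matrix (Fin n) (Fin n) ℝ) (b : Fin m → ℝ) :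
    Set (Matrix (Fin n) (Fin n) ℝ) := {X | X.IsSymm ∧ Aop A X = b ∧ X.PosSemidef}

/-- Optimal value `f* = inf {Tr(C X) : X ∈ 𝒞}` of the SDP. -/
def fstar {n m : ℕ} (A : Fin m → Matrix (Fin n) (Fin n) ℝ) (b : Fin m → ℝ)
    (C : Matrix (Fin n) (Fin n) ℝ) : ℝ := sInf ((fun X => (C * X).trace) '' sdpFeas A b)

/-- The factorized feasible set `ℳ_p = {Y : 𝒜(Y Yᵀ) = b}`. -/
def facFeas {n m : ℕ} (A : Fin m → Matrix (Fin n) (Fin n) ℝ) (b : Fin m → ℝ) (p : ℕ) :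
    Set (Matrix (Fin n) (Fin p) ℝ) := {Y | Aop A (Y * Yᵀ) = b}

/-- Tangent space `T_Yℳ = {Ydot : 𝒜(Ydot Yᵀ + Y Ydotᵀ) = 0}`. -/
def tangentSet {n m p : ℕ} (A : Fin m → Matrix (Fin n) (Fin n) ℝ)
    (Y : Matrix (Fin n) (Fin p) ℝ) : Set (Matrix (Fin n) (Fin p) ℝ) :=
  {Ydot | Aop A (Ydot * Yᵀ + Y * Ydotᵀ) = 0}

/-- Second-order critical point of the factorized problem. -/
def IsSOCP {n m p : ℕ} (A : Fin m → Matrix (Fin n) (Fin n) ℝ) (b : Fin m → ℝ)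
    (C : Matrix (Fin n) (Fin n) ℝ) (Y : Matrix (Fin n) (Fin p) ℝ) : Prop :=
  Y ∈ facFeas A b p ∧ ∃ μ : Fin m → ℝ,
    (C - Aadj A μ) * Y = 0 ∧
    ∀ Ydot ∈ tangentSet A Y, 0 ≤ frobInner Ydot ((C - Aadj A μ) * Ydot)

/-- The real vector space of symmetric `n × n` matrices. -/
def symmSpace (n : ℕ) : Submodule ℝ (Matrix (Fin n) (Fin n) ℝ) where
  carrier := {X | X.IsSymm}
  add_mem' := fun ha hb => ha.add hb
  zero_mem' := Matrix.isSymm_zero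
  smul_mem' := fun c X hX => by
    show (c • X)ᵀ = c • X
    rw [Matrix.transpose_smul, hX]

instance (n : ℕ) : MeasurableSpace ↥(symmSpace n) := borel _

/-- A set of symmetric matrices is null if it has measure zero for every additive Haar
measure on the finite-dimensional real vector space of symmetric `n × n` matrices. -/
def IsNullSymmSet (n : ℕ) (S : Set (Matrix (Fin n) (Fin n) ℝ)) : Prop :=
  ∀ μ : Measure ↥(symmSpace n), μ.IsAddHaarMeasure →
    μ {C : ↥(symmSpace n) | (C : Matrix (Fin n) (Fin n) ℝ) ∈ S} = 0

open scoped ComplexOrder MatrixOrder in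
lemma trace_mul_nonneg_of_posSemidef {ι 𝕜 : Type*} [Fintype ι] [RCLike 𝕜] {P X : Matrix ι ι 𝕜}
    (hP : P.PosSemidef) (hX : X.PosSemidef) : 0 ≤ (P * X).trace := by
  classical
  obtain ⟨B, rfl⟩ := CStarAlgebra.nonneg_iff_eq_star_mul_self.mp hX.nonneg
  calc 0 ≤ (B * P * Bᴴ).trace := (hP.mul_mul_conjTranspose_same B).trace_nonneg
    _ = (P * (Bᴴ * B)).trace := by rw [Matrix.mul_assoc, trace_mul_comm, Matrix.mul_assoc]

open scoped ComplexOrder in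
lemma neg_mul_trace_le_trace_mul {ι 𝕜 : Type*} [Fintype ι] [DecidableEq ι] [RCLike 𝕜]
    {S X : Matrix ι ι 𝕜} {c : 𝕜} (hS : (S + c • (1 : Matrix ι ι 𝕜)).PosSemidef)
    (hX : X.PosSemidef) : -(c * X.trace) ≤ (S * X).trace := by
  have h := trace_mul_nonneg_of_posSemidef hS hX
  rwa [Matrix.add_mul, smul_mul, Matrix.one_mul, trace_add, trace_smul, smul_eq_mul,
    ← neg_le_iff_add_nonneg] at h

section Frobenius

variable {n p : ℕ}

lemma frobInner_eq_sum (A B : Matrix (Fin n) (Fin p) ℝ) :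
    frobInner A B = ∑ x : Fin p × Fin n, A x.2 x.1 * B x.2 x.1 := by
  rw [frobInner, ← vec_dotProduct_vec]
  rfl

lemma frobInner_le_frobNorm_mul_frobNorm (A B : Matrix (Fin n) (Fin p) ℝ) :
    frobInner A B ≤ frobNorm A * frobNorm B := by
  simpa only [frobNorm, frobInner_eq_sum, ← pow_two] using
    Real.sum_mul_le_sqrt_mul_sqrt Finset.univ _ _

lemma frobNorm_eq_sqrt_trace (Y : Matrix (Fin n) (Fin p) ℝ) :
    frobNorm Y = √(Y * Yᵀ).trace := by
  rw [frobNorm, frobInner, trace_mul_comm]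

lemma trace_mul_self_mul_transpose_le (S : Matrix (Fin n) (Fin n) ℝ)
    (Y : Matrix (Fin n) (Fin p) ℝ) :
    (S * (Y * Yᵀ)).trace ≤ frobNorm (S * Y) * √(Y * Yᵀ).trace :=
  calc (S * (Y * Yᵀ)).trace = frobInner Y (S * Y) := by
        rw [frobInner, trace_mul_comm Yᵀ, Matrix.mul_assoc]
    _ ≤ frobNorm Y * frobNorm (S * Y) := frobInner_le_frobNorm_mul_frobNorm _ _
    _ = frobNorm (S * Y) * √(Y * Yᵀ).trace := by rw [mul_comm, frobNorm_eq_sqrt_trace Y]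

end Frobenius

section OptimalityGap

variable {n m p : ℕ} {A : Fin m → Matrix (Fin n) (Fin n) ℝ} {b : Fin m → ℝ}
  {C X : Matrix (Fin n) (Fin n) ℝ} {Y : Matrix (Fin n) (Fin p) ℝ} {μ : Fin m → ℝ}
  {R εg εH : ℝ}

lemma self_mul_transpose_mem_sdpFeas (hY : Y ∈ facFeas A b p) : Y * Yᵀ ∈ sdpFeas A b :=
  ⟨by rw [IsSymm, transpose_mul, transpose_transpose], hY, posSemidef_self_mul_conjTranspose Y⟩

lemma trace_Aadj_mul (A : Fin m → Matrix (Fin n) (Fin n) ℝ) (μ : Fin m → ℝ)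
    (X : Matrix (Fin n) (Fin n) ℝ) : (Aadj A μ * X).trace = μ ⬝ᵥ Aop A X := by
  simp [Aadj, Aop, dotProduct, Matrix.sum_mul, trace_sum]

lemma trace_sub_Aadj_mul (hX : Aop A X = b) :
    ((C - Aadj A μ) * X).trace = (C * X).trace - μ ⬝ᵥ b := by
  rw [Matrix.sub_mul, trace_sub, trace_Aadj_mul, hX]

lemma two_mul_trace_sub_trace_le (hY : Y ∈ facFeas A b p)
    (hgrad : frobNorm ((2 : ℝ) • ((C - Aadj A μ) * Y)) ≤ εg)
    (hhess : (C - Aadj A μ + (εH / 2) • (1 : Matrix (Fin n) (Fin n) ℝ)).PosSemidef)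
    (hX : X ∈ sdpFeas A b) :
    2 * ((C * (Y * Yᵀ)).trace - (C * X).trace) ≤ εH * X.trace + εg * √(Y * Yᵀ).trace := by
  have hgap : (C * (Y * Yᵀ)).trace - (C * X).trace =
      ((C - Aadj A μ) * (Y * Yᵀ)).trace - ((C - Aadj A μ) * X).trace := by
    rw [trace_sub_Aadj_mul hX.2.1, trace_sub_Aadj_mul hY, sub_sub_sub_cancel_right]
  have hgradient_term : 2 * ((C - Aadj A μ) * (Y * Yᵀ)).trace ≤ εg * √(Y * Yᵀ).trace := by
    have hcs := trace_mul_self_mul_transpose_le ((2 : ℝ) • (C - Aadj A μ)) Y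
    rw [smul_mul, smul_mul, trace_smul, smul_eq_mul] at hcs
    exact hcs.trans (by gcongr)
  have hhessian_term : -(εH / 2 * X.trace) ≤ ((C - Aadj A μ) * X).trace :=
    neg_mul_trace_le_trace_mul hhess hX.2.2
  linarith

theorem optimality_gap_bound_general (hY : Y ∈ facFeas A b p)
    (hR : R ∈ upperBounds (Matrix.trace '' sdpFeas A b)) (hεH : 0 ≤ εH)
    (hgrad : frobNorm ((2 : ℝ) • ((C - Aadj A μ) * Y)) ≤ εg)
    (hhess : (C - Aadj A μ + (εH / 2) • (1 : Matrix (Fin n) (Fin n) ℝ)).PosSemidef) :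
    0 ≤ 2 * ((C * (Y * Yᵀ)).trace - fstar A b C) ∧
    2 * ((C * (Y * Yᵀ)).trace - fstar A b C) ≤ εH * R + εg * √R := by
  have hYY := self_mul_transpose_mem_sdpFeas hY
  have hεg : 0 ≤ εg := (Real.sqrt_nonneg _).trans hgrad
  have hlower : (C * (Y * Yᵀ)).trace - (εH * R + εg * √R) / 2 ∈
      lowerBounds ((fun X => (C * X).trace) '' sdpFeas A b) := by
    rintro _ ⟨X, hX, rfl⟩
    have hgap : 2 * ((C * (Y * Yᵀ)).trace - (C * X).trace) ≤ εH * R + εg * √R := by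
      refine (two_mul_trace_sub_trace_le hY hgrad hhess hX).trans ?_
      gcongr
      exacts [hR ⟨X, hX, rfl⟩, hR ⟨_, hYY, rfl⟩]
    dsimp only
    linarith
  have hupper : fstar A b C ≤ (C * (Y * Yᵀ)).trace := csInf_le ⟨_, hlower⟩ ⟨_, hYY, rfl⟩
  have hfstar : (C * (Y * Yᵀ)).trace - (εH * R + εg * √R) / 2 ≤ fstar A b C :=
    le_csInf ⟨_, _, hYY, rfl⟩ hlower
  constructor <;> linarith

end OptimalityGap

/-- optimality gap bound (Lemma on approximate criticality).
If `‖2 S Y‖ ≤ ε_g` and `S + (ε_H/2) I ⪰ 0`, then `0 ≤ 2(f(Y) − f*) ≤ ε_H R + ε_g √R`. -/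
theorem optimality_gap_bound
    (n m p : ℕ) (hn : 0 < n) (hm : 0 < m) (hp : 0 < p)
    (A : Fin m → Matrix (Fin n) (Fin n) ℝ) (hA : ∀ i, (A i).IsSymm) (b : Fin m → ℝ)
    (C : Matrix (Fin n) (Fin n) ℝ) (hC : C.IsSymm)
    (Y : Matrix (Fin n) (Fin p) ℝ) (hY : Y ∈ facFeas A b p)
    (μ : Fin m → ℝ) (S : Matrix (Fin n) (Fin n) ℝ) (hS : S = C - Aadj A μ)
    (hcompact : IsCompact (sdpFeas A b))
    (R : ℝ) (hR : R = sSup (Matrix.trace '' sdpFeas A b))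
    (εg εH : ℝ) (hεg : 0 ≤ εg) (hεH : 0 ≤ εH)
    (hgrad : frobNorm ((2 : ℝ) • (S * Y)) ≤ εg)
    (hhess : (S + (εH / 2) • (1 : Matrix (Fin n) (Fin n) ℝ)).PosSemidef) :
    0 ≤ 2 * ((C * (Y * Yᵀ)).trace - fstar A b C) ∧
    2 * ((C * (Y * Yᵀ)).trace - fstar A b C) ≤ εH * R + εg * Real.sqrt R := by
  subst hS hR
  have hbdd := (hcompact.image continuous_id.matrix_trace).bddAbove
  exact optimality_gap_bound_general hY (fun _ => le_csSup hbdd) hεH hgrad hhess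

end
end

section
/- Let Y ∈ ℳ have deficient column rank, i.e., rank(Y) < p, and let S be any symmetric n×n matrix. If ε_H ≥ 0 is such that 2⟨Ẏ, S Ẏ⟩ ≥ −ε_H ‖Ẏ‖² for all Ẏ ∈ T_Yℳ, then S + (ε_H/2) I_n is positive semidefinite. -/
open Matrix MeasureTheory

noncomputable section

/-! If `rank Y < p`, then `Y z = 0` for some `z ≠ 0`. For every `x`, the direction `x zᵀ` satisfies
`(x zᵀ) Yᵀ = 0`, so it is tangent whatever the constraints are. The quadratic form of a matrix `T`
along it is `⟨x zᵀ, T x zᵀ⟩ = (xᵀ T x) ‖z‖²`, so the lower bound on the tangent space controls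
`xᵀ T x` for all `x`, where `T = S + (ε_H / 2) I`. -/

theorem exists_mulVec_eq_zero_of_rank_lt_card {R ι κ : Type*} [CommRing R] [Nontrivial R]
    [Fintype κ] {M : Matrix ι κ R} (hM : M.rank < Fintype.card κ) :
    ∃ v ≠ 0, M *ᵥ v = 0 := by
  by_contra! hker
  have hinj : Function.Injective M.mulVecLin :=
    (injective_iff_map_eq_zero M.mulVecLin).mpr fun v hv => by_contra fun hv0 => hker v hv0 hv
  have hrank : M.rank = Fintype.card κ := by
    rw [Matrix.rank, LinearMap.finrank_range_of_inj hinj, Module.finrank_fintype_fun_eq_card]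
  exact hM.ne hrank

section Frobenius

variable {n p : ℕ}

theorem frobInner_self_nonneg (X : Matrix (Fin n) (Fin p) ℝ) : 0 ≤ frobInner X X :=
  (posSemidef_conjTranspose_mul_self X).trace_nonneg

theorem frobNorm_sq (X : Matrix (Fin n) (Fin p) ℝ) : frobNorm X ^ 2 = frobInner X X :=
  Real.sq_sqrt (frobInner_self_nonneg X)

theorem frobInner_add_smul_one_mul (S : Matrix (Fin n) (Fin n) ℝ) (c : ℝ)
    (X : Matrix (Fin n) (Fin p) ℝ) :
    frobInner X ((S + c • (1 : Matrix (Fin n) (Fin n) ℝ)) * X) =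
      frobInner X (S * X) + c * frobNorm X ^ 2 := by
  rw [frobNorm_sq]
  simp only [frobInner, Matrix.add_mul, Matrix.smul_mul, Matrix.one_mul, Matrix.mul_add,
    Matrix.mul_smul, trace_add, trace_smul, smul_eq_mul]

theorem frobInner_vecMulVec (x y : Fin n → ℝ) (z w : Fin p → ℝ) :
    frobInner (vecMulVec x z) (vecMulVec y w) = (x ⬝ᵥ y) * (z ⬝ᵥ w) := by
  rw [frobInner, transpose_vecMulVec, vecMulVec_mul_vecMulVec, trace_vecMulVec, dotProduct_smul,
    smul_eq_mul]

theorem posSemidef_of_frobInner_vecMulVec_nonneg {T : Matrix (Fin n) (Fin n) ℝ} (hT : T.IsSymm)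
    {z : Fin p → ℝ} (hz : z ≠ 0)
    (hnonneg : ∀ x : Fin n → ℝ, 0 ≤ frobInner (vecMulVec x z) (T * vecMulVec x z)) :
    T.PosSemidef := by
  have hzz : 0 < z ⬝ᵥ z := dotProduct_star_self_pos_iff.mpr hz
  refine .of_dotProduct_mulVec_nonneg (isHermitian_iff_isSymm.mpr hT) fun x => ?_
  have hx := hnonneg x
  rw [mul_vecMulVec, frobInner_vecMulVec] at hx
  exact nonneg_of_mul_nonneg_left hx hzz

end Frobenius

section TangentSpace

variable {n m p : ℕ} (A : Fin m → Matrix (Fin n) (Fin n) ℝ) {Y : Matrix (Fin n) (Fin p) ℝ}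

theorem mem_tangentSet_of_mul_transpose_eq_zero {Ydot : Matrix (Fin n) (Fin p) ℝ}
    (h : Ydot * Yᵀ = 0) : Ydot ∈ tangentSet A Y := by
  have h' : Y * Ydotᵀ = 0 := by
    rw [← transpose_transpose Y, ← transpose_mul, h, transpose_zero]
  funext i
  simp [Aop, h, h']

theorem vecMulVec_mem_tangentSet (x : Fin n → ℝ) {z : Fin p → ℝ} (hz : Y *ᵥ z = 0) :
    vecMulVec x z ∈ tangentSet A Y :=
  mem_tangentSet_of_mul_transpose_eq_zero A <| by
    rw [vecMulVec_mul, vecMul_transpose, hz, vecMulVec_zero]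

end TangentSpace

theorem S_psd_of_rank_deficient_second_order_general {n m p : ℕ}
    (A : Fin m → Matrix (Fin n) (Fin n) ℝ) {Y : Matrix (Fin n) (Fin p) ℝ} (hrank : Y.rank < p)
    {S : Matrix (Fin n) (Fin n) ℝ} (hS : S.IsSymm) {ε : ℝ}
    (hhess : ∀ Ydot ∈ tangentSet A Y,
      -(ε * frobNorm Ydot ^ 2) ≤ 2 * frobInner Ydot (S * Ydot)) :
    (S + (ε / 2) • (1 : Matrix (Fin n) (Fin n) ℝ)).PosSemidef := by
  obtain ⟨z, hz, hYz⟩ : ∃ z ≠ 0, Y *ᵥ z = 0 :=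
    exists_mulVec_eq_zero_of_rank_lt_card (by rwa [Fintype.card_fin])
  have hsymm : (S + (ε / 2) • (1 : Matrix (Fin n) (Fin n) ℝ)).IsSymm :=
    hS.add (isSymm_one.smul _)
  refine posSemidef_of_frobInner_vecMulVec_nonneg hsymm hz fun x => ?_
  have hx := hhess _ (vecMulVec_mem_tangentSet A x hYz)
  rw [frobInner_add_smul_one_mul]
  linarith

/-- if `Y ∈ ℳ` is column-rank deficient and the quadratic form
`2⟨Ydot, S Ydot⟩` is bounded below by `−ε_H ‖Ydot‖²` on the tangent space, then
`S + (ε_H/2) I ⪰ 0`. -/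
theorem S_psd_of_rank_deficient_second_order
    (n m p : ℕ) (hn : 0 < n) (hm : 0 < m) (hp : 0 < p)
    (A : Fin m → Matrix (Fin n) (Fin n) ℝ) (hA : ∀ i, (A i).IsSymm) (b : Fin m → ℝ)
    (Y : Matrix (Fin n) (Fin p) ℝ) (hY : Y ∈ facFeas A b p) (hrank : Y.rank < p)
    (S : Matrix (Fin n) (Fin n) ℝ) (hSsymm : S.IsSymm)
    (εH : ℝ) (hεH : 0 ≤ εH)
    (hhess : ∀ Ydot ∈ tangentSet A Y,
      -(εH * frobNorm Ydot ^ 2) ≤ 2 * frobInner Ydot (S * Ydot)) :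
    (S + (εH / 2) • (1 : Matrix (Fin n) (Fin n) ℝ)).PosSemidef := by
  exact S_psd_of_rank_deficient_second_order_general A hrank hSsymm hhess

end
end

section
/- Assume p(p+1)/2 > m. Then the set {C symmetric n×n : there exists ν ∈ ℝ^m with dim ker(C − 𝒜*(ν)) ≥ p} is a null set of symmetric matrices; that is, for almost all symmetric C, every matrix of the form C − 𝒜*(ν) has nullity strictly less than p. -/
open Matrix MeasureTheory

noncomputable section

/-!
Dimension count. If `C` is symmetric and `C - Φ w` has nullity at least `p`, then after reordering
the coordinates its kernel contains the columns of a block matrix with an arbitrary block `X` above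
the identity of size `p`. Write `n = r + p`. The equation `C [X; 1] = Φ w [X; 1]` and symmetry then
determine `C` polynomially from its upper left `r × r` block, from `X` and from `Φ w`. Hence these
`C` lie in finitely many `C¹` images of a space of dimension `r(r+1)/2 + rp + dim W`, which is less
than `n(n+1)/2`, the dimension of the symmetric matrices, exactly when `dim W < p(p+1)/2`. Sets
whose Hausdorff dimension is less than the dimension of the ambient space are null.
-/

section LinearAlgebra

variable {K ι κ r p : Type*} [Field K] [Fintype p]

lemma exists_isUnit_submatrix_of_linearIndependent_col [Finite ι] [DecidableEq p]
    {V : Matrix ι p K} (hV : LinearIndependent K V.col) :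
    ∃ f : p → ι, Function.Injective f ∧ IsUnit (V.submatrix f id) := by
  obtain ⟨κ, a, ha, hspan, hrows⟩ := exists_linearIndependent' K V.row
  have : Fintype κ := @Fintype.ofFinite κ (Finite.of_injective a ha)
  have hcard : Fintype.card p = Fintype.card κ := by
    rw [← finrank_span_eq_card hrows, hspan, ← V.rank_eq_finrank_span_row,
      V.rank_eq_finrank_span_cols, finrank_span_eq_card hV]
  let e : p ≃ κ := Fintype.equivOfCardEq hcard
  exact ⟨a ∘ e, ha.comp e.injective,
    linearIndependent_rows_iff_isUnit.1 (hrows.comp e e.injective)⟩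

variable [Fintype ι]

lemma exists_sumEquiv_comp_inr_eq [Fintype r]
    (hcard : Fintype.card r + Fintype.card p = Fintype.card ι)
    {f : p → ι} (hf : Function.Injective f) : ∃ e : r ⊕ p ≃ ι, e ∘ Sum.inr = f := by
  let e₀ : r ⊕ p ≃ ι := Fintype.equivOfCardEq (by rw [Fintype.card_sum, hcard])
  obtain ⟨σ, hσ⟩ :=
    Equiv.Perm.exists_extending_pair (e₀ ∘ Sum.inr) f (e₀.injective.comp Sum.inr_injective) hf
  exact ⟨e₀.trans σ, funext hσ⟩

lemma exists_mul_eq_zero_of_card_le_finrank_ker {M : Matrix κ ι K}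
    (hM : Fintype.card p ≤ Module.finrank K (LinearMap.ker M.mulVecLin)) :
    ∃ V : Matrix ι p K, LinearIndependent K V.col ∧ M * V = 0 := by
  obtain ⟨v, hv⟩ := exists_linearIndependent_of_le_finrank hM
  let w : p → LinearMap.ker M.mulVecLin := v ∘ Fintype.equivFin p
  have hw : LinearIndependent K w := hv.comp _ (Fintype.equivFin p).injective
  refine ⟨of fun i j => (w j : ι → K) i, hw.map' _ (Submodule.ker_subtype _), ?_⟩
  ext i j
  exact congrFun (w j).2 i

-- Column operations turn `p` independent kernel vectors into the columns of `fromRows X 1`.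
lemma exists_submatrix_mul_fromRows_one_eq_zero [Fintype r] [DecidableEq p] {M : Matrix κ ι K}
    (hcard : Fintype.card r + Fintype.card p = Fintype.card ι)
    (hM : Fintype.card p ≤ Module.finrank K (LinearMap.ker M.mulVecLin)) :
    ∃ (e : r ⊕ p ≃ ι) (X : Matrix r p K),
      M.submatrix id e * fromRows X (1 : Matrix p p K) = 0 := by
  obtain ⟨V, hV, hMV⟩ := exists_mul_eq_zero_of_card_le_finrank_ker hM
  obtain ⟨f, hf, hunit⟩ := exists_isUnit_submatrix_of_linearIndependent_col hV
  obtain ⟨e, rfl⟩ := exists_sumEquiv_comp_inr_eq hcard hf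
  let V₁ := V.submatrix (e ∘ Sum.inl) id
  let V₂ := V.submatrix (e ∘ Sum.inr) id
  have hrows : fromRows (V₁ * V₂⁻¹) 1 = V.submatrix e id * V₂⁻¹ := by
    rw [← mul_nonsing_inv V₂ ((isUnit_iff_isUnit_det V₂).1 hunit), ← fromRows_mul]
    exact congrArg (· * V₂⁻¹) (fromRows_toRows (V.submatrix e id))
  refine ⟨e, V₁ * V₂⁻¹, ?_⟩
  rw [hrows, ← Matrix.mul_assoc, submatrix_mul_equiv, hMV, submatrix_zero, Pi.zero_apply,
    Pi.zero_apply, Matrix.zero_mul]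

end LinearAlgebra

section SymmCompletion

variable {R r p : Type*} [CommRing R] [Fintype r]

/-- The symmetric matrix with upper left block `S` whose product with `fromRows X 1` is `G`,
provided that `S` is symmetric and such a matrix exists. The formula makes sense without these
provisos and is polynomial in the entries of `S`, `X` and `G`. -/
def symmCompletion (S : Matrix r r R) (X : Matrix r p R) (G : Matrix (r ⊕ p) p R) :
    Matrix (r ⊕ p) (r ⊕ p) R :=
  fromBlocks S (G.toRows₁ - S * X) (G.toRows₁ - S * X)ᵀ (G.toRows₂ - (G.toRows₁ - S * X)ᵀ * X)

lemma symmCompletion_toBlocks₁₁_mul [Fintype p] [DecidableEq p] {C : Matrix (r ⊕ p) (r ⊕ p) R}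
    (hC : C.IsSymm) (X : Matrix r p R) :
    symmCompletion C.toBlocks₁₁ X (C * fromRows X (1 : Matrix p p R)) = C := by
  have htranspose : C.toBlocks₁₂ᵀ = C.toBlocks₂₁ := ext fun i j => hC.apply _ _
  have hmul : C * fromRows X (1 : Matrix p p R) =
      fromRows (C.toBlocks₁₁ * X + C.toBlocks₁₂) (C.toBlocks₂₁ * X + C.toBlocks₂₂) := by
    conv_lhs => rw [← fromBlocks_toBlocks C]
    rw [fromBlocks_mul_fromRows, Matrix.mul_one, Matrix.mul_one]
  rw [symmCompletion, hmul, toRows₁_fromRows, toRows₂_fromRows, add_sub_cancel_left, htranspose,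
    add_sub_cancel_left, fromBlocks_toBlocks]

end SymmCompletion

section Smoothness

open scoped Matrix.Norms.Elementwise

variable {E : Type*} [NormedAddCommGroup E] [NormedSpace ℝ E] {k : WithTop ℕ∞}
  {ι κ l : Type*} [Fintype ι] [Fintype κ] [Fintype l]

lemma contDiff_matrix {F : E → Matrix ι κ ℝ} :
    ContDiff ℝ k F ↔ ∀ i j, ContDiff ℝ k fun x => F x i j :=
  contDiff_pi.trans (forall_congr' fun _ => contDiff_pi)

lemma contDiff_matrix_mul {F : E → Matrix ι κ ℝ} {G : E → Matrix κ l ℝ} (hF : ContDiff ℝ k F)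
    (hG : ContDiff ℝ k G) : ContDiff ℝ k fun x => F x * G x := by
  rw [contDiff_matrix] at *
  simp only [mul_apply]
  fun_prop

lemma contDiff_symmCompletion {S : E → Matrix ι ι ℝ} {X : E → Matrix ι κ ℝ}
    {G : E → Matrix (ι ⊕ κ) κ ℝ} (hS : ContDiff ℝ k S) (hX : ContDiff ℝ k X)
    (hG : ContDiff ℝ k G) : ContDiff ℝ k fun x => symmCompletion (S x) (X x) (G x) := by
  rw [contDiff_matrix] at *
  rintro (i | i) (j | j) <;>
    simp only [symmCompletion, fromBlocks_apply₁₁, fromBlocks_apply₁₂, fromBlocks_apply₂₁,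
      fromBlocks_apply₂₂, transpose_apply, Matrix.sub_apply, mul_apply, toRows₁_apply,
      toRows₂_apply] <;>
    fun_prop

end Smoothness

section HausdorffDimension

open Module

lemma addHaar_eq_zero_of_dimH_image_lt {V F : Type*} [AddCommGroup V] [TopologicalSpace V]
    [IsTopologicalAddGroup V] [Module ℝ V] [ContinuousSMul ℝ V] [T2Space V]
    [FiniteDimensional ℝ V] [MeasurableSpace V] [BorelSpace V]
    [NormedAddCommGroup F] [NormedSpace ℝ F] {L : V →ₗ[ℝ] F} (hL : Function.Injective L)
    (μ : Measure V) [μ.IsAddHaarMeasure] {s : Set V} (hs : dimH (L '' s) < finrank ℝ V) :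
    μ s = 0 := by
  let e : V ≃L[ℝ] LinearMap.range L := (LinearEquiv.ofInjective L hL).toContinuousLinearEquiv
  let : MeasurableSpace (LinearMap.range L) := borel _
  have : BorelSpace (LinearMap.range L) := ⟨rfl⟩
  have hdim : dimH (e '' s) < finrank ℝ (LinearMap.range L) := by
    rw [← isometry_subtype_coe.dimH_image, Set.image_image, ← e.toLinearEquiv.finrank_eq]
    exact hs
  have hac : μ.map e ≪ Measure.hausdorffMeasure (finrank ℝ (LinearMap.range L)) :=
    Measure.absolutelyContinuous_isAddHaarMeasure _ _
  have hmap : μ.map e (e '' s) = 0 :=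
    measure_zero_of_dimH_lt (d := finrank ℝ (LinearMap.range L)) (mod_cast hac) (mod_cast hdim)
  have hpre : μ (e ⁻¹' (e '' s)) = 0 :=
    (e.toHomeomorph.measurableEmbedding.map_apply μ _).symm.trans hmap
  rwa [Set.preimage_image_eq s e.injective] at hpre

end HausdorffDimension

section SymmSpace

open Module
open scoped Matrix.Norms.Elementwise

/-- Coordinates on symmetric matrices: the entries, indexed by unordered pairs of indices. -/
def symmSpaceEquivSym2 (n : ℕ) : symmSpace n ≃ₗ[ℝ] (Sym2 (Fin n) → ℝ) where
  toFun C := Sym2.lift ⟨C.1, fun i j => IsSymm.apply C.2 j i⟩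
  map_add' _ _ := funext <| Sym2.ind fun _ _ => rfl
  map_smul' _ _ := funext <| Sym2.ind fun _ _ => rfl
  invFun x := ⟨of fun i j => x s(i, j), IsSymm.ext fun _ _ => congrArg x Sym2.eq_swap⟩
  left_inv _ := rfl
  right_inv _ := funext <| Sym2.ind fun _ _ => rfl

lemma finrank_symmSpace (n : ℕ) : finrank ℝ (symmSpace n) = (n + 1).choose 2 := by
  rw [(symmSpaceEquivSym2 n).finrank_eq, finrank_fintype_fun_eq_card, Sym2.card, Fintype.card_fin]

lemma isNullSymmSet_of_dimH_lt {n : ℕ} {T : Set (Matrix (Fin n) (Fin n) ℝ)}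
    (hT : dimH {C | C.IsSymm ∧ C ∈ T} < finrank ℝ (symmSpace n)) : IsNullSymmSet n T := by
  intro μ hμ
  have : BorelSpace (symmSpace n) := ⟨rfl⟩
  refine addHaar_eq_zero_of_dimH_image_lt (symmSpace n).subtype_injective μ (hT.trans_le' ?_)
  refine dimH_mono ?_
  rintro _ ⟨C, hCT, rfl⟩
  exact ⟨C.2, hCT⟩

end SymmSpace

section NullityChart

open Module
open scoped Matrix.Norms.Elementwise

variable {n p r : ℕ} {W : Type*}

/-- A parametrization whose range contains every symmetric matrix `C` such that `C - Φ w`, with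
coordinates reordered by `e`, annihilates the columns of `fromRows X 1` for some `w` and `X`. The
parameter `t` consists of the upper left block of the reordered `C`, the matrix `X` and the
point `w`. -/
def nullityChart (e : Fin r ⊕ Fin p ≃ Fin n) (Φ : W → Matrix (Fin n) (Fin n) ℝ)
    (t : symmSpace r × Matrix (Fin r) (Fin p) ℝ × W) : Matrix (Fin n) (Fin n) ℝ :=
  (symmCompletion t.1 t.2.1
    ((Φ t.2.2).submatrix e e * fromRows t.2.1 (1 : Matrix (Fin p) (Fin p) ℝ))).submatrix
      e.symm e.symm

lemma exists_mem_range_nullityChart (hrp : r + p = n) {Φ : W → Matrix (Fin n) (Fin n) ℝ}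
    {C : Matrix (Fin n) (Fin n) ℝ} (hC : C.IsSymm) {w : W}
    (hw : p ≤ finrank ℝ (LinearMap.ker (C - Φ w).mulVecLin)) :
    ∃ e : Fin r ⊕ Fin p ≃ Fin n, C ∈ Set.range (nullityChart e Φ) := by
  obtain ⟨e, X, hX⟩ := exists_submatrix_mul_fromRows_one_eq_zero (M := C - Φ w)
    (r := Fin r) (p := Fin p) (by simpa using hrp) (by simpa using hw)
  have hCe : (C.submatrix e e).IsSymm := hC.submatrix e
  have hS : (C.submatrix e e).toBlocks₁₁.IsSymm := hCe.submatrix Sum.inl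
  have hCX : C.submatrix e e * fromRows X (1 : Matrix (Fin p) (Fin p) ℝ) =
      (Φ w).submatrix e e * fromRows X (1 : Matrix (Fin p) (Fin p) ℝ) := by
    rw [← sub_eq_zero, ← Matrix.sub_mul]
    exact congrArg (submatrix · e id) hX
  refine ⟨e, (⟨(C.submatrix e e).toBlocks₁₁, hS⟩, X, w), ?_⟩
  change (symmCompletion (C.submatrix e e).toBlocks₁₁ X ((Φ w).submatrix e e *
    fromRows X (1 : Matrix (Fin p) (Fin p) ℝ))).submatrix e.symm e.symm = C
  rw [← hCX, symmCompletion_toBlocks₁₁_mul hCe]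
  simp

variable [NormedAddCommGroup W] [NormedSpace ℝ W]

lemma contDiff_nullityChart {k : WithTop ℕ∞} (e : Fin r ⊕ Fin p ≃ Fin n)
    {Φ : W → Matrix (Fin n) (Fin n) ℝ} (hΦ : ContDiff ℝ k Φ) : ContDiff ℝ k (nullityChart e Φ) := by
  have hX : ContDiff ℝ k fun t : symmSpace r × Matrix (Fin r) (Fin p) ℝ × W => t.2.1 := by fun_prop
  have hrows : ContDiff ℝ k fun t : symmSpace r × Matrix (Fin r) (Fin p) ℝ × W =>
      fromRows t.2.1 (1 : Matrix (Fin p) (Fin p) ℝ) :=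
    contDiff_matrix.2 <| Sum.rec (fun i => contDiff_matrix.1 hX i) fun _ _ => contDiff_const
  have hsub : ContDiff ℝ k fun t : symmSpace r × Matrix (Fin r) (Fin p) ℝ × W =>
      (Φ t.2.2).submatrix e e :=
    contDiff_matrix.2 fun i j => contDiff_matrix.1 (hΦ.comp (contDiff_snd.comp contDiff_snd)) _ _
  have hS : ContDiff ℝ k fun t : symmSpace r × Matrix (Fin r) (Fin p) ℝ × W =>
      (t.1 : Matrix (Fin r) (Fin r) ℝ) :=
    (symmSpace r).subtypeₗᵢ.contDiff.comp contDiff_fst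
  have := contDiff_symmCompletion hS hX (contDiff_matrix_mul hsub hrows)
  exact contDiff_matrix.2 fun i j => contDiff_matrix.1 this _ _

lemma dimH_setOf_exists_le_nullity_le [FiniteDimensional ℝ W] (hrp : r + p = n)
    {Φ : W → Matrix (Fin n) (Fin n) ℝ} (hΦ : ContDiff ℝ 1 Φ) :
    dimH {C | C.IsSymm ∧ ∃ w, p ≤ finrank ℝ (LinearMap.ker (C - Φ w).mulVecLin)} ≤
      ((r + 1).choose 2 + (r * p + finrank ℝ W) : ℕ) := by
  calc
    dimH {C | C.IsSymm ∧ ∃ w, p ≤ finrank ℝ (LinearMap.ker (C - Φ w).mulVecLin)}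
    _ ≤ dimH (⋃ e : Fin r ⊕ Fin p ≃ Fin n, Set.range (nullityChart e Φ)) :=
      dimH_mono fun C ⟨hC, w, hw⟩ => Set.mem_iUnion.2 (exists_mem_range_nullityChart hrp hC hw)
    _ = ⨆ e : Fin r ⊕ Fin p ≃ Fin n, dimH (Set.range (nullityChart e Φ)) := dimH_iUnion _
    _ ≤ finrank ℝ (symmSpace r × Matrix (Fin r) (Fin p) ℝ × W) :=
      iSup_le fun e => (contDiff_nullityChart e hΦ).dimH_range_le
    _ = _ := by
      simp only [finrank_prod, finrank_symmSpace, finrank_matrix, Fintype.card_fin, finrank_self,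
        mul_one]

end NullityChart

lemma two_mul_choose_two_succ (k : ℕ) : 2 * (k + 1).choose 2 = k * (k + 1) := by
  have h := Nat.add_one_mul_choose_eq k 1
  rw [Nat.choose_one_right] at h
  linarith

lemma choose_two_add_mul_add_choose_two (r p : ℕ) :
    (r + 1).choose 2 + r * p + (p + 1).choose 2 = (r + p + 1).choose 2 := by
  linarith [two_mul_choose_two_succ r, two_mul_choose_two_succ p, two_mul_choose_two_succ (r + p)]

open scoped Matrix.Norms.Elementwise in
theorem generic_nullity_lt_p_general {n p : ℕ} {W : Type*} [NormedAddCommGroup W]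
    [NormedSpace ℝ W] [FiniteDimensional ℝ W] {Φ : W → Matrix (Fin n) (Fin n) ℝ}
    (hΦ : ContDiff ℝ 1 Φ) (hW : 2 * Module.finrank ℝ W < p * (p + 1)) :
    IsNullSymmSet n {C | ∃ w, p ≤ Module.finrank ℝ (LinearMap.ker (C - Φ w).mulVecLin)} := by
  obtain hnp | hpn := lt_or_ge n p
  · have hempty : {C | ∃ w, p ≤ Module.finrank ℝ (LinearMap.ker (C - Φ w).mulVecLin)} = ∅ := by
      refine Set.eq_empty_of_forall_notMem fun C ⟨w, hw⟩ => hnp.not_ge (hw.trans ?_)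
      simpa using Submodule.finrank_le (LinearMap.ker (C - Φ w).mulVecLin)
    rw [hempty]
    exact fun _ _ => measure_empty
  · obtain ⟨r, rfl⟩ := Nat.exists_eq_add_of_le' hpn
    refine isNullSymmSet_of_dimH_lt ((dimH_setOf_exists_le_nullity_le rfl hΦ).trans_lt ?_)
    rw [finrank_symmSpace, Nat.cast_lt]
    linarith [choose_two_add_mul_add_choose_two r p, two_mul_choose_two_succ p]

open scoped Matrix.Norms.Elementwise in
lemma contDiff_aadj {n m : ℕ} {k : WithTop ℕ∞} (A : Fin m → Matrix (Fin n) (Fin n) ℝ) :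
    ContDiff ℝ k (Aadj A) := by
  unfold Aadj
  fun_prop

/-- if `p(p+1)/2 > m`, then for almost all symmetric `C`, every matrix of
the form `C − 𝒜*(ν)` has nullity less than `p`. -/
theorem generic_nullity_lt_p
    (n m p : ℕ) (hn : 0 < n) (hm : 0 < m) (hp : 0 < p)
    (A : Fin m → Matrix (Fin n) (Fin n) ℝ) (hA : ∀ i, (A i).IsSymm)
    (hpm : 2 * m < p * (p + 1)) :
    IsNullSymmSet n {C | ∃ ν : Fin m → ℝ,
      p ≤ Module.finrank ℝ (LinearMap.ker (C - Aadj A ν).mulVecLin)} :=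
  generic_nullity_lt_p_general (contDiff_aadj A) (by simpa using hpm)

end
end

section
/- Let Y ∈ ℳ, μ ∈ ℝ^m, and S = C − 𝒜*(μ). If S Y = 0 and S is positive semidefinite, then Tr(C Y Yᵀ) ≤ Tr(C X) for every X ∈ 𝒞; that is, X = Y Yᵀ is a global minimizer of the SDP and Y is a global minimizer of the factorized problem. -/
open Matrix MeasureTheory

noncomputable section

/-!
With `S = C - ∑ i, μ i • A i`, on the affine space `{X | ∀ i, Tr(A i * X) = b i}` the cost
`Tr(C * X)` and the slack pairing `Tr(S * X)` differ by the constant `∑ i, μ i * b i`. The slack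
pairing is nonnegative on the positive semidefinite cone and vanishes at `Y * Yᵀ` because
`S * Y = 0`, so the cost is smallest there.
-/

section WeakDuality

open scoped ComplexOrder MatrixOrder

variable {𝕜 ι n : Type*} [RCLike 𝕜] [Fintype ι] [Fintype n]

theorem trace_mul_nonneg_of_posSemidef_s15 {S X : Matrix n n 𝕜} (hS : S.PosSemidef)
    (hX : X.PosSemidef) : 0 ≤ (S * X).trace := by
  classical
  obtain ⟨B, rfl⟩ : ∃ B : Matrix n n 𝕜, X = Bᴴ * B :=
    CStarAlgebra.nonneg_iff_eq_star_mul_self.mp hX.nonneg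
  calc
    0 ≤ (B * S * Bᴴ).trace := (hS.mul_mul_conjTranspose_same B).trace_nonneg
    _ = (S * (Bᴴ * B)).trace := by rw [Matrix.mul_assoc, trace_mul_comm, Matrix.mul_assoc]

theorem trace_sub_sum_smul_mul {R l : Type*} [Ring R] [Fintype l] (A : ι → Matrix l n R)
    (μ : ι → R) (C : Matrix l n R) (X : Matrix n l R) :
    ((C - ∑ i, μ i • A i) * X).trace = (C * X).trace - ∑ i, μ i * (A i * X).trace := by
  simp only [Matrix.sub_mul, Matrix.sum_mul, Matrix.smul_mul, trace_sub, trace_sum, trace_smul,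
    smul_eq_mul]

variable {A : ι → Matrix n n 𝕜} {b μ : ι → 𝕜} {C X Z : Matrix n n 𝕜}

theorem sum_mul_le_trace_mul_of_posSemidef (hS : (C - ∑ i, μ i • A i).PosSemidef)
    (hX : ∀ i, (A i * X).trace = b i) (hXpsd : X.PosSemidef) :
    ∑ i, μ i * b i ≤ (C * X).trace := by
  have slack_nonneg : 0 ≤ ((C - ∑ i, μ i • A i) * X).trace :=
    trace_mul_nonneg_of_posSemidef_s15 hS hXpsd
  simpa only [trace_sub_sum_smul_mul, hX, sub_nonneg] using slack_nonneg

theorem dual_certificate_global_optimality_general (hS : (C - ∑ i, μ i • A i).PosSemidef)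
    (hZ : ∀ i, (A i * Z).trace = b i) (hSZ : ((C - ∑ i, μ i • A i) * Z).trace = 0)
    (hX : ∀ i, (A i * X).trace = b i) (hXpsd : X.PosSemidef) :
    (C * Z).trace ≤ (C * X).trace :=
  calc
    (C * Z).trace = ∑ i, μ i * b i := by
      simpa only [trace_sub_sum_smul_mul, hZ, sub_eq_zero] using hSZ
    _ ≤ (C * X).trace := sum_mul_le_trace_mul_of_posSemidef hS hX hXpsd

end WeakDuality

/-- dual certificate. If `S Y = 0` and `S ⪰ 0` with `S = C − 𝒜*(μ)`, then
`Y Yᵀ` is a global minimizer of the SDP (and `Y` of the factorized problem). -/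
theorem dual_certificate_global_optimality
    (n m p : ℕ) (hn : 0 < n) (hm : 0 < m) (hp : 0 < p)
    (A : Fin m → Matrix (Fin n) (Fin n) ℝ) (hA : ∀ i, (A i).IsSymm) (b : Fin m → ℝ)
    (C : Matrix (Fin n) (Fin n) ℝ) (hC : C.IsSymm)
    (Y : Matrix (Fin n) (Fin p) ℝ) (hY : Y ∈ facFeas A b p)
    (μ : Fin m → ℝ) (S : Matrix (Fin n) (Fin n) ℝ) (hS : S = C - Aadj A μ)
    (hSY : S * Y = 0) (hSpsd : S.PosSemidef) :
    ∀ X ∈ sdpFeas A b, (C * (Y * Yᵀ)).trace ≤ (C * X).trace := by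
  subst hS
  have slack_trace_eq_zero : ((C - Aadj A μ) * (Y * Yᵀ)).trace = 0 := by
    rw [← Matrix.mul_assoc, hSY, Matrix.zero_mul, trace_zero]
  exact fun X ⟨_, hX, hXpsd⟩ ↦ dual_certificate_global_optimality_general hSpsd
    (congrFun hY) slack_trace_eq_zero (congrFun hX) hXpsd

end
end
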